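/- arXiv:2110.12766 — 3 statements merged into one kernel-verified Lean document; each statement's English description precedes it below -/
import Mathlib

section
/- (Fundamental Lemma.) Consider the noise-free LTI system x_{t+1} = A x_t + B u_t, y_t = C x_t + D u_t, and assume the pair (A,B) is controllable, i.e. rank [B, AB, …, A^{n_x−1}B] = n_x. Let (u^s_t, y^s_t)_{t=0}^{N−1} be an input-output trajectory of this system and suppose the input sequence u^s is persistently exciting of order L + n_x. Then a pair of sequences (ū_t, ȳ_t)_{t=0}^{L−1} is an input-output trajectory of the system (i.e., there is a state sequence x̄_0,…,x̄_{L−1} with x̄_{t+1} = A x̄_t + B ū_t and ȳ_t = C x̄_t + D ū_t) if and only if there exists g ∈ ℝ^{N−L+1} such that H_L(u^s) g = ū and H_L(y^s) g = ȳ, where ū, ȳ denote the stacked vectors of the sequences. -/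
/-- Block Hankel matrix with `L` block rows and `cols` columns built from the
`ℝ^m`-valued sequence `z`: the `((i,a), j)` entry is `z (i + j) a`. -/
def hankel {m : ℕ} (L cols : ℕ) (z : ℕ → Fin m → ℝ) :
    Matrix (Fin L × Fin m) (Fin cols) ℝ :=
  Matrix.of fun p j => z ((p.1 : ℕ) + (j : ℕ)) p.2

/-- A sequence of length `N` is persistently exciting of order `L` if its block Hankel
matrix with `L` block rows has full row rank `m * L`. -/
def persistentlyExciting {m : ℕ} (N L : ℕ) (z : ℕ → Fin m → ℝ) : Prop :=
  (hankel L (N - L + 1) z).rank = m * L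

/-- The controllability matrix `[B, AB, …, A^{n_x−1}B]`. -/
def ctrbMat {nx nu : ℕ} (A : Matrix (Fin nx) (Fin nx) ℝ) (B : Matrix (Fin nx) (Fin nu) ℝ) :
    Matrix (Fin nx) (Fin nx × Fin nu) ℝ :=
  Matrix.of fun i p => (A ^ (p.1 : ℕ) * B) i p.2

theorem fl_surj_of_rank {m n : Type*} [Fintype m] [Fintype n] [DecidableEq m] [DecidableEq n]
    (M : Matrix m n ℝ) (h : M.rank = Fintype.card m) (w : m → ℝ) : ∃ g, M.mulVec g = w := by
  have h1 : LinearMap.range M.mulVecLin = ⊤ := by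
    apply Submodule.eq_top_of_finrank_eq
    rw [Module.finrank_fintype_fun_eq_card]
    exact h
  have h2 : w ∈ LinearMap.range M.mulVecLin := by rw [h1]; trivial
  obtain ⟨g, hg⟩ := h2
  exact ⟨g, by simpa using hg⟩

theorem fl_inj_of_rank {m n : Type*} [Fintype m] [Fintype n] [DecidableEq m] [DecidableEq n]
    (M : Matrix m n ℝ) (h : M.rank = Fintype.card m) (v : m → ℝ) (hv : Matrix.vecMul v M = 0) :
    v = 0 := by
  obtain ⟨g, hg⟩ := fl_surj_of_rank M h v
  have : v ⬝ᵥ v = 0 := by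
    nth_rewrite 2 [← hg]
    rw [Matrix.dotProduct_mulVec, hv, zero_dotProduct]
  exact dotProduct_self_eq_zero.mp this

theorem fl_rank_of_inj {m n : Type*} [Fintype m] [Fintype n] [DecidableEq m] [DecidableEq n]
    (M : Matrix m n ℝ) (h : ∀ v, Matrix.vecMul v M = 0 → v = 0) : M.rank = Fintype.card m := by
  rw [← Matrix.rank_transpose]
  have : Function.Injective (Matrix.mulVecLin M.transpose) := by
    rw [injective_iff_map_eq_zero]
    intro v hv
    apply h
    simpa [Matrix.mulVec_transpose] using hv
  have h2 := LinearMap.finrank_range_of_inj this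
  rw [Module.finrank_fintype_fun_eq_card] at h2
  exact h2

/-- Coefficients of the shifted annihilating relations. -/
def flW {nx nu : ℕ} (A : Matrix (Fin nx) (Fin nx) ℝ) (B : Matrix (Fin nx) (Fin nu) ℝ)
    (ξ : Fin nx → ℝ) (η : ℕ → Fin nu → ℝ) : ℕ → ℕ → Fin nu → ℝ
  | 0, m => η m
  | k + 1, 0 => Matrix.vecMul ξ (A ^ k * B)
  | k + 1, m + 1 => flW A B ξ η k m

theorem flW_shift {nx nu : ℕ} (A : Matrix (Fin nx) (Fin nx) ℝ) (B : Matrix (Fin nx) (Fin nu) ℝ)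
    (ξ : Fin nx → ℝ) (η : ℕ → Fin nu → ℝ) (d k m : ℕ) :
    flW A B ξ η (k + d) (m + d) = flW A B ξ η k m := by
  induction d with
  | zero => rfl
  | succ d ih => rw [← ih]; rfl

theorem flW_zero {nx nu : ℕ} (A : Matrix (Fin nx) (Fin nx) ℝ) (B : Matrix (Fin nx) (Fin nu) ℝ)
    (ξ : Fin nx → ℝ) (η : ℕ → Fin nu → ℝ) (L : ℕ) (hη : ∀ m, L ≤ m → η m = 0) (k m : ℕ)
    (h : L + k ≤ m) : flW A B ξ η k m = 0 := by
  obtain ⟨d, rfl⟩ : ∃ d, m = d + k := ⟨m - k, by omega⟩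
  have := flW_shift A B ξ η k 0 d
  rw [zero_add] at this
  rw [this]
  exact hη d (by omega)

theorem flW_rel {nx nu N L : ℕ} (A : Matrix (Fin nx) (Fin nx) ℝ) (B : Matrix (Fin nx) (Fin nu) ℝ)
    (us : ℕ → Fin nu → ℝ) (xs : ℕ → Fin nx → ℝ)
    (hL : 1 ≤ L)
    (hdyn : ∀ t, t + 1 < N → xs (t + 1) = A.mulVec (xs t) + B.mulVec (us t))
    (ξ : Fin nx → ℝ) (η : ℕ → Fin nu → ℝ)
    (h : ∀ j, j + L ≤ N → ξ ⬝ᵥ xs j + ∑ i ∈ Finset.range L, η i ⬝ᵥ us (j + i) = 0)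
    (k j : ℕ) (hj : j + k + L ≤ N) :
    Matrix.vecMul ξ (A ^ k) ⬝ᵥ xs j
      + ∑ m ∈ Finset.range (L + k), flW A B ξ η k m ⬝ᵥ us (j + m) = 0 := by
  induction k generalizing j with
  | zero => simpa [flW] using h j (by omega)
  | succ k ih =>
    have h1 := ih (j + 1) (by omega)
    rw [hdyn j (by omega), dotProduct_add, Matrix.dotProduct_mulVec, Matrix.dotProduct_mulVec,
      Matrix.vecMul_vecMul, Matrix.vecMul_vecMul, ← pow_succ] at h1
    rw [← add_assoc, Finset.sum_range_succ']
    simp only [flW]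
    rw [← h1]
    have : ∑ m ∈ Finset.range (L + k), flW A B ξ η k m ⬝ᵥ us (j + (m + 1))
        = ∑ m ∈ Finset.range (L + k), flW A B ξ η k m ⬝ᵥ us (j + 1 + m) :=
      Finset.sum_congr rfl fun m _ => by rw [show j + (m + 1) = j + 1 + m by omega]
    rw [this, add_zero]
    ring

theorem fl_key {nx nu N L : ℕ} (hL : 1 ≤ L) (hN : L + nx ≤ N)
    (A : Matrix (Fin nx) (Fin nx) ℝ) (B : Matrix (Fin nx) (Fin nu) ℝ)
    (hctrb : (ctrbMat A B).rank = nx)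
    (us : ℕ → Fin nu → ℝ) (xs : ℕ → Fin nx → ℝ)
    (hdyn : ∀ t, t + 1 < N → xs (t + 1) = A.mulVec (xs t) + B.mulVec (us t))
    (hpe : persistentlyExciting N (L + nx) us)
    (ξ : Fin nx → ℝ) (η : ℕ → Fin nu → ℝ) (hη : ∀ m, L ≤ m → η m = 0)
    (h : ∀ j, j + L ≤ N → ξ ⬝ᵥ xs j + ∑ i ∈ Finset.range L, η i ⬝ᵥ us (j + i) = 0) :
    ξ = 0 ∧ η = 0 := by
  set c : ℕ → ℝ := fun k => A.charpoly.coeff k with hc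
  have hdeg : A.charpoly.natDegree = nx := by simp [Matrix.charpoly_natDegree_eq_dim]
  have hcn : c nx = 1 := by
    have := A.charpoly_monic.coeff_natDegree
    rwa [hdeg] at this
  have hCH : ∑ k ∈ Finset.range (nx + 1), c k • A ^ k = 0 := by
    have := A.aeval_self_charpoly
    rwa [Polynomial.aeval_eq_sum_range, hdeg] at this
  have hrel : ∀ k ≤ nx, ∀ j, j + nx + L ≤ N → Matrix.vecMul ξ (A ^ k) ⬝ᵥ xs j
      + ∑ m ∈ Finset.range (L + nx), flW A B ξ η k m ⬝ᵥ us (j + m) = 0 := by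
    intro k hk j hj
    rw [← flW_rel A B us xs hL hdyn ξ η h k j (by omega)]
    congr 1
    symm
    apply Finset.sum_subset
    · intro x hx; simp only [Finset.mem_range] at *; omega
    · intro x _ hx
      rw [flW_zero A B ξ η L hη k x (by simpa using hx), zero_dotProduct]
  have hsum : ∀ j, j + nx + L ≤ N → ∑ m ∈ Finset.range (L + nx),
      (∑ k ∈ Finset.range (nx + 1), c k • flW A B ξ η k m) ⬝ᵥ us (j + m) = 0 := by
    intro j hj
    have h1 : ∑ k ∈ Finset.range (nx + 1), c k * (Matrix.vecMul ξ (A ^ k) ⬝ᵥ xs j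
      + ∑ m ∈ Finset.range (L + nx), flW A B ξ η k m ⬝ᵥ us (j + m)) = 0 := by
      apply Finset.sum_eq_zero
      intro k hk
      rw [hrel k (by simpa [Nat.lt_succ_iff] using hk) j hj, mul_zero]
    have h2 : ∑ k ∈ Finset.range (nx + 1), c k * (Matrix.vecMul ξ (A ^ k) ⬝ᵥ xs j) = 0 := by
      have : Matrix.vecMul ξ (∑ k ∈ Finset.range (nx + 1), c k • A ^ k) ⬝ᵥ xs j = 0 := by
        rw [hCH, Matrix.vecMul_zero, zero_dotProduct]
      rw [← this, Matrix.vecMul_sum, sum_dotProduct]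
      apply Finset.sum_congr rfl
      intro k _
      rw [Matrix.vecMul_smul, smul_dotProduct, smul_eq_mul]
    simp only [mul_add, Finset.sum_add_distrib, h2, zero_add] at h1
    rw [← h1]
    simp only [Finset.mul_sum, sum_dotProduct, smul_dotProduct, smul_eq_mul]
    rw [Finset.sum_comm]
  have hcoef : ∀ m < L + nx, ∑ k ∈ Finset.range (nx + 1), c k • flW A B ξ η k m = 0 := by
    have h0 := fl_inj_of_rank (hankel (L + nx) (N - (L + nx) + 1) us)
      (by rw [hpe]; simp [mul_comm])
      (fun p => (∑ k ∈ Finset.range (nx + 1), c k • flW A B ξ η k p.1) p.2)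
      (by
        ext j
        rw [Pi.zero_apply, ← hsum j (by omega), Finset.sum_range]
        simp only [Matrix.vecMul, dotProduct, Fintype.sum_prod_type, hankel, Matrix.of_apply]
        apply Finset.sum_congr rfl
        intro i _
        rw [add_comm (i : ℕ) (j : ℕ)])
    intro m hm
    ext a
    exact congrFun h0 (⟨m, hm⟩, a)
  have hW : ∀ d m, L + nx ≤ m + d → flW A B ξ η nx m = 0 := by
    intro d
    induction d with
    | zero => intro m hm; exact flW_zero A B ξ η L hη nx m (by omega)
    | succ d ih =>
      intro m hm
      by_cases hlt : m < L + nx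
      · have h1 := hcoef m hlt
        rw [Finset.sum_range_succ, hcn, one_smul, Finset.sum_eq_zero, zero_add] at h1
        · exact h1
        · intro k hk
          have hk' : k < nx := by simpa using hk
          have h2 := flW_shift A B ξ η (nx - k) k m
          rw [Nat.add_sub_cancel' hk'.le] at h2
          rw [← h2, ih _ (by omega), smul_zero]
      · exact ih m (by omega)
  have hW' : ∀ m, flW A B ξ η nx m = 0 := fun m => hW (L + nx) m (by omega)
  constructor
  · apply fl_inj_of_rank (ctrbMat A B) (by simpa using hctrb)
    ext p
    obtain ⟨k, a⟩ := p
    have h2 := flW_shift A B ξ η (nx - (k + 1)) (k + 1) 0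
    rw [Nat.add_sub_cancel' (by omega), hW'] at h2
    have h3 := congrFun h2 a
    exact h3.symm
  · ext1 m
    have h2 := flW_shift A B ξ η nx 0 m
    rw [zero_add, hW'] at h2
    exact h2.symm

/-- Fundamental Lemma (Willems et al.): for a controllable noise-free LTI system and a
pre-collected trajectory with persistently exciting input of order `L + n_x`, a length-`L`
pair of sequences is an input-output trajectory of the system iff it is in the range of the
stacked Hankel matrices of the pre-collected data. -/
theorem stmt_2 (nx nu ny N L : ℕ) (hL : 1 ≤ L) (hN : L + nx ≤ N)
    (A : Matrix (Fin nx) (Fin nx) ℝ) (B : Matrix (Fin nx) (Fin nu) ℝ)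
    (C : Matrix (Fin ny) (Fin nx) ℝ) (D : Matrix (Fin ny) (Fin nu) ℝ)
    (hctrb : (ctrbMat A B).rank = nx)
    (us : ℕ → Fin nu → ℝ) (ys : ℕ → Fin ny → ℝ) (xs : ℕ → Fin nx → ℝ)
    (hdyn : ∀ t, t + 1 < N → xs (t + 1) = A.mulVec (xs t) + B.mulVec (us t))
    (hout : ∀ t, t < N → ys t = C.mulVec (xs t) + D.mulVec (us t))
    (hpe : persistentlyExciting N (L + nx) us)
    (ub : ℕ → Fin nu → ℝ) (yb : ℕ → Fin ny → ℝ) :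
    (∃ xb : ℕ → Fin nx → ℝ,
        (∀ t, t + 1 < L → xb (t + 1) = A.mulVec (xb t) + B.mulVec (ub t)) ∧
        (∀ t, t < L → yb t = C.mulVec (xb t) + D.mulVec (ub t))) ↔
    (∃ g : Fin (N - L + 1) → ℝ,
        (hankel L (N - L + 1) us).mulVec g = (fun p : Fin L × Fin nu => ub p.1 p.2) ∧
        (hankel L (N - L + 1) ys).mulVec g = (fun p : Fin L × Fin ny => yb p.1 p.2)) := by
  have hin : ∀ (t : ℕ) (j : Fin (N - L + 1)), t < L → t + (j : ℕ) < N := fun t j ht => by omega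
  -- entries of the Hankel products
  have hH : ∀ {m : ℕ} (z : ℕ → Fin m → ℝ) (zb : ℕ → Fin m → ℝ) (g : Fin (N - L + 1) → ℝ),
      (hankel L (N - L + 1) z).mulVec g = (fun p : Fin L × Fin m => zb p.1 p.2) ↔
      ∀ t < L, ∑ j, g j • z (t + j) = zb t := by
    intro m z zb g
    constructor
    · intro h t ht
      ext a
      have := congrFun h (⟨t, ht⟩, a)
      simp only [Matrix.mulVec, dotProduct, hankel, Matrix.of_apply] at this
      rw [← this, Finset.sum_apply]
      exact Finset.sum_congr rfl fun j _ => by simp [mul_comm]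
    · intro h
      ext ⟨t, a⟩
      simp only [Matrix.mulVec, dotProduct, hankel, Matrix.of_apply]
      rw [← h t t.2, Finset.sum_apply]
      exact Finset.sum_congr rfl fun j _ => by simp [mul_comm]
  have hX : ∀ (g : Fin (N - L + 1) → ℝ) (t : ℕ), t + 1 < L →
      ∑ j, g j • xs (t + 1 + j) =
        A.mulVec (∑ j, g j • xs (t + j)) + B.mulVec (∑ j, g j • us (t + j)) := by
    intro g t ht
    simp only [Matrix.mulVec_sum, Matrix.mulVec_smul, ← Finset.sum_add_distrib, ← smul_add]
    refine Finset.sum_congr rfl fun j _ => ?_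
    rw [← hdyn _ (by have := hin (t + 1) j ht; omega)]
    congr 2
    omega
  have hY : ∀ (g : Fin (N - L + 1) → ℝ) (t : ℕ), t < L →
      ∑ j, g j • ys (t + j) =
        C.mulVec (∑ j, g j • xs (t + j)) + D.mulVec (∑ j, g j • us (t + j)) := by
    intro g t ht
    simp only [Matrix.mulVec_sum, Matrix.mulVec_smul, ← Finset.sum_add_distrib, ← smul_add]
    refine Finset.sum_congr rfl fun j _ => ?_
    rw [← hout _ (hin t j ht)]
  simp only [hH]
  constructor
  · rintro ⟨xb, hxb, hyb⟩
    let K : Matrix (Fin nx ⊕ Fin L × Fin nu) (Fin (N - L + 1)) ℝ :=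
      Matrix.fromRows (Matrix.of fun i j => xs j i) (hankel L (N - L + 1) us)
    have hK : K.rank = Fintype.card (Fin nx ⊕ Fin L × Fin nu) := by
      apply fl_rank_of_inj
      intro v hv
      have hk := fl_key hL hN A B hctrb us xs hdyn hpe (fun i => v (Sum.inl i))
        (fun m a => if hm : m < L then v (Sum.inr (⟨m, hm⟩, a)) else 0)
        (by
          intro m hm
          ext a
          simp [Nat.not_lt.mpr hm])
        (by
          intro j hj
          have h1 := congrFun hv ⟨j, by omega⟩
          rw [Pi.zero_apply] at h1
          rw [← h1, Finset.sum_range]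
          simp only [K, Matrix.vecMul, dotProduct, Fintype.sum_sum_type, Fintype.sum_prod_type,
            hankel, Matrix.of_apply, Matrix.fromRows_apply_inl, Matrix.fromRows_apply_inr,
            Fin.is_lt, dite_true, Fin.eta]
          congr 1
          refine Finset.sum_congr rfl fun i _ => ?_
          rw [add_comm (i : ℕ) j])
      ext p
      rcases p with i | ⟨t, a⟩
      · exact congrFun hk.1 i
      · have := congrFun (congrFun hk.2 t) a
        simpa using this
    obtain ⟨g, hg⟩ := fl_surj_of_rank K hK
      (Sum.elim (xb 0) (fun p : Fin L × Fin nu => ub p.1 p.2))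
    have hgu : ∀ t < L, ∑ j, g j • us (t + j) = ub t := by
      rw [← hH us ub g]
      ext p
      exact congrFun hg (Sum.inr p)
    have hgx : ∀ t < L, ∑ j, g j • xs (t + j) = xb t := by
      intro t
      induction t with
      | zero =>
        intro _
        ext i
        have := congrFun hg (Sum.inl i)
        simp only [Sum.elim_inl] at this
        rw [← this, Finset.sum_apply]
        simp only [K, Matrix.mulVec, dotProduct, Matrix.of_apply, Matrix.fromRows_apply_inl]
        exact Finset.sum_congr rfl fun j _ => by simp [mul_comm]
      | succ t ih =>
        intro ht
        rw [hX g t ht, ih (by omega), hgu t (by omega), hxb t ht]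
    refine ⟨g, hgu, fun t ht => ?_⟩
    rw [hY g t ht, hgx t ht, hgu t ht, hyb t ht]
  · rintro ⟨g, hgu, hgy⟩
    refine ⟨fun t => ∑ j, g j • xs (t + j), fun t ht => ?_, fun t ht => ?_⟩
    · rw [← hgu t (by omega)]
      exact hX g t ht
    · rw [← hgu t ht, ← hgy t ht]
      exact hY g t ht
end

section
/- Consider the noise-free LTI system x_{t+1} = A x_t + B u_t with (A,B) controllable, i.e. rank [B, AB, …, A^{n_x−1}B] = n_x. Let (u^s_t)_{t=0}^{N−1} be an input sequence persistently exciting of order L + n_x, and let (x^s_t)_{t=0}^{N−1} be a corresponding state trajectory, i.e. x^s_{t+1} = A x^s_t + B u^s_t for 0 ≤ t ≤ N−2. Then the (n_u·L + n_x) × (N − L + 1) matrix obtained by stacking H_L(u^s) on top of the row of states [x^s_0, x^s_1, …, x^s_{N−L}] has full row rank n_u·L + n_x. -/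
theorem rank_full_iff {m n : Type*} [Fintype m] [Fintype n]
    (M : Matrix m n ℝ) : M.rank = Fintype.card m ↔ ∀ v : m → ℝ, Matrix.vecMul v M = 0 → v = 0 := by
  have h1 : (∀ v : m → ℝ, Matrix.vecMul v M = 0 → v = 0) ↔ LinearIndependent ℝ M.row := by
    rw [← Matrix.vecMul_injective_iff]
    exact (injective_iff_map_eq_zero M.vecMulLinear).symm
  rw [h1, linearIndependent_iff_card_eq_finrank_span, Matrix.rank_eq_finrank_span_row]
  exact eq_comm

/-- Input coefficients in reversed order, continued by the Markov rows. -/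
noncomputable def coefSeq {nx nu : ℕ} (A : Matrix (Fin nx) (Fin nx) ℝ)
    (B : Matrix (Fin nx) (Fin nu) ℝ) (L : ℕ) (η : ℕ → Fin nu → ℝ) (ξ : Fin nx → ℝ) (n : ℕ) :
    Fin nu → ℝ :=
  if n < L then η (L - 1 - n) else Matrix.vecMul ξ (A ^ (n - L) * B)

theorem rel_shift {nx nu N L : ℕ} (hL : 1 ≤ L)
    (A : Matrix (Fin nx) (Fin nx) ℝ) (B : Matrix (Fin nx) (Fin nu) ℝ)
    (us : ℕ → Fin nu → ℝ) (xs : ℕ → Fin nx → ℝ)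
    (hdyn : ∀ t, t + 1 < N → xs (t + 1) = A.mulVec (xs t) + B.mulVec (us t))
    (η : ℕ → Fin nu → ℝ) (ξ : Fin nx → ℝ)
    (h0 : ∀ j, j + L ≤ N → ∑ i ∈ Finset.range L, η i ⬝ᵥ us (j + i) + ξ ⬝ᵥ xs j = 0) (k : ℕ) :
    ∀ j, j + k + L ≤ N →
      ∑ q ∈ Finset.range (k + L), coefSeq A B L η ξ (k + L - 1 - q) ⬝ᵥ us (j + q)
        + Matrix.vecMul ξ (A ^ k) ⬝ᵥ xs j = 0 := by
  induction k with
  | zero =>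
    intro j hj
    rw [← h0 j (by omega)]
    simp only [zero_add, pow_zero, Matrix.vecMul_one]
    congr 1
    apply Finset.sum_congr rfl
    intro q hq
    have := Finset.mem_range.1 hq
    rw [coefSeq, if_pos (by omega)]
    congr 2
    omega
  | succ k ih =>
    intro j hj
    rw [← ih (j + 1) (by omega), hdyn j (by omega), show k + 1 + L = (k + L) + 1 by omega,
      Finset.sum_range_succ', add_assoc]
    congr 1
    · apply Finset.sum_congr rfl
      intro q hq
      have := Finset.mem_range.1 hq
      congr 2 <;> omega
    · rw [coefSeq, if_neg (by omega), show k + L + 1 - 1 - 0 - L = k by omega, dotProduct_add,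
        Matrix.dotProduct_mulVec, Matrix.dotProduct_mulVec, Matrix.vecMul_vecMul,
        Matrix.vecMul_vecMul, pow_succ, add_zero, add_comm]

/-- For a controllable system driven by an input that is persistently exciting of order
`L + n_x`, the matrix obtained by stacking the order-`L` input Hankel matrix on top of the
row of states has full row rank `n_u·L + n_x`. -/
theorem stmt_3 (nx nu N L : ℕ) (hL : 1 ≤ L) (hN : L + nx ≤ N)
    (A : Matrix (Fin nx) (Fin nx) ℝ) (B : Matrix (Fin nx) (Fin nu) ℝ)
    (hctrb : (ctrbMat A B).rank = nx)
    (us : ℕ → Fin nu → ℝ) (xs : ℕ → Fin nx → ℝ)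
    (hdyn : ∀ t, t + 1 < N → xs (t + 1) = A.mulVec (xs t) + B.mulVec (us t))
    (hpe : persistentlyExciting N (L + nx) us) :
    (Matrix.of fun (r : (Fin L × Fin nu) ⊕ Fin nx) (j : Fin (N - L + 1)) =>
        match r with
        | Sum.inl p => us ((p.1 : ℕ) + (j : ℕ)) p.2
        | Sum.inr i => xs (j : ℕ) i).rank = nu * L + nx := by
  set M := (Matrix.of fun (r : (Fin L × Fin nu) ⊕ Fin nx) (j : Fin (N - L + 1)) =>
        match r with
        | Sum.inl p => us ((p.1 : ℕ) + (j : ℕ)) p.2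
        | Sum.inr i => xs (j : ℕ) i) with hM
  have hcard : nu * L + nx = Fintype.card ((Fin L × Fin nu) ⊕ Fin nx) := by
    simp [mul_comm]
  rw [hcard, rank_full_iff]
  intro v hv
  have hpe' := (rank_full_iff (hankel (L + nx) (N - (L + nx) + 1) us)).1 (by
    rw [show _ = _ from hpe]; simp [mul_comm])
  have hc' := (rank_full_iff (ctrbMat A B)).1 (by rw [hctrb]; simp)
  let η : ℕ → Fin nu → ℝ := fun i a => if h : i < L then v (Sum.inl (⟨i, h⟩, a)) else 0
  let ξ : Fin nx → ℝ := fun i => v (Sum.inr i)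
  have h0 : ∀ j, j + L ≤ N → ∑ i ∈ Finset.range L, η i ⬝ᵥ us (j + i) + ξ ⬝ᵥ xs j = 0 := by
    intro j hj
    have h := congrFun hv ⟨j, by omega⟩
    simp only [Matrix.vecMul, dotProduct, Fintype.sum_sum_type, Fintype.sum_prod_type, hM,
      Matrix.of_apply, Pi.zero_apply] at h
    rw [← h, Finset.sum_range]
    simp [dotProduct, η, ξ, add_comm]
  have hrel := rel_shift hL A B us xs hdyn η ξ h0
  set h := coefSeq A B L η ξ with hh
  let c : ℕ → ℝ := A.charpoly.coeff
  have hdeg : A.charpoly.natDegree = nx := by simp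
  have hcn : c nx = 1 := by
    have := A.charpoly_monic.coeff_natDegree
    rwa [hdeg] at this
  have hCH : ∑ k ∈ Finset.range (nx + 1), c k • A ^ k = 0 := by
    have := A.aeval_self_charpoly
    rwa [Polynomial.aeval_eq_sum_range, hdeg] at this
  let W : ℕ → Fin nu → ℝ := fun q =>
    ∑ k ∈ Finset.range (nx + 1), c k • (if q < k + L then h (k + L - 1 - q) else 0)
  have hW : ∀ j, j + nx + L ≤ N → ∑ q ∈ Finset.range (L + nx), W q ⬝ᵥ us (j + q) = 0 := by
    intro j hj
    have e1 : ∑ k ∈ Finset.range (nx + 1), c k *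
        (∑ q ∈ Finset.range (k + L), h (k + L - 1 - q) ⬝ᵥ us (j + q)
        + Matrix.vecMul ξ (A ^ k) ⬝ᵥ xs j) = 0 := by
      apply Finset.sum_eq_zero
      intro k hk
      have := Finset.mem_range.1 hk
      rw [hrel k j (by omega), mul_zero]
    have e2 : ∑ k ∈ Finset.range (nx + 1), c k * (Matrix.vecMul ξ (A ^ k) ⬝ᵥ xs j) = 0 := by
      have : ∑ k ∈ Finset.range (nx + 1), c k * (Matrix.vecMul ξ (A ^ k) ⬝ᵥ xs j)
          = ξ ⬝ᵥ Matrix.mulVec (∑ k ∈ Finset.range (nx + 1), c k • A ^ k) (xs j) := by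
        rw [Matrix.sum_mulVec, dotProduct_sum]
        apply Finset.sum_congr rfl
        intro k _
        rw [Matrix.smul_mulVec, dotProduct_smul, Matrix.dotProduct_mulVec, smul_eq_mul]
      rw [this, hCH]; simp
    simp only [mul_add, Finset.sum_add_distrib] at e1
    rw [e2, add_zero] at e1
    rw [← e1]
    simp only [W, sum_dotProduct]
    rw [Finset.sum_comm]
    apply Finset.sum_congr rfl
    intro k hk
    have := Finset.mem_range.1 hk
    rw [Finset.mul_sum]
    symm
    rw [← Finset.sum_subset (s₁ := Finset.range (k + L)) (s₂ := Finset.range (L + nx))]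
    · apply Finset.sum_congr rfl
      intro q hq
      rw [if_pos (Finset.mem_range.1 hq), smul_dotProduct, smul_eq_mul]
    · intro q hq
      rw [Finset.mem_range] at hq ⊢
      omega
    · intro q _ hq
      rw [Finset.mem_range] at hq
      rw [if_neg hq]; simp
  have hW0 : ∀ q, q < L + nx → W q = 0 := by
    have := hpe' (fun p => W p.1 p.2) (by
      funext j
      rw [Pi.zero_apply, ← hW j (by have := j.2; omega), Finset.sum_range]
      simp [Matrix.vecMul, dotProduct, hankel, Fintype.sum_prod_type, add_comm])
    intro q hq
    funext a
    exact congrFun this (⟨q, hq⟩, a)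
  have hz : ∀ r, r < L + nx → h r = 0 := by
    intro r
    induction r using Nat.strong_induction_on with
    | _ r ih =>
      intro hr
      have := hW0 (nx + L - 1 - r) (by omega)
      simp only [W] at this
      rw [Finset.sum_range_succ, hcn, one_smul, if_pos (by omega),
        show nx + L - 1 - (nx + L - 1 - r) = r by omega, Finset.sum_eq_zero, zero_add] at this
      · exact this
      · intro k hk
        have := Finset.mem_range.1 hk
        split_ifs
        · rw [ih _ (by omega) (by omega), smul_zero]
        · simp
  have hξ : ξ = 0 := by
    apply hc'
    funext p
    have h1 := hz (L + p.1) (by have := p.1.2; omega)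
    rw [hh, coefSeq, if_neg (by omega), Nat.add_sub_cancel_left] at h1
    exact congrFun h1 p.2
  funext r
  rcases r with ⟨i, a⟩ | i
  · have hi := i.2
    have h1 := hz (L - 1 - i) (by omega)
    rw [hh, coefSeq, if_pos (by omega), show L - 1 - (L - 1 - (i : ℕ)) = i by omega] at h1
    have h2 := congrFun h1 a
    simpa [η] using h2
  · exact congrFun hξ i
end

section
/- (Existence of a deadbeat observer gain.) If the pair (C,A) is observable, then there exists a matrix L ∈ ℝ^{n_x×n_y} such that (A − L C)^{n_x} = 0, i.e. A − L C is nilpotent. -/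
/-- The observability matrix `[Cᵀ, (CA)ᵀ, …, (CA^{n−1})ᵀ]ᵀ` with `n` block rows. -/
def obsMat {nx ny : ℕ} (n : ℕ) (A : Matrix (Fin nx) (Fin nx) ℝ)
    (C : Matrix (Fin ny) (Fin nx) ℝ) : Matrix (Fin n × Fin ny) (Fin nx) ℝ :=
  Matrix.of fun p j => (C * A ^ (p.1 : ℕ)) p.2 j

theorem nilp_swap {V W : Type} [AddCommGroup V] [Module ℝ V] [AddCommGroup W] [Module ℝ W]
    (f : V →ₗ[ℝ] W) (g : W →ₗ[ℝ] V) (h : IsNilpotent (g ∘ₗ f : Module.End ℝ V)) :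
    IsNilpotent (f ∘ₗ g : Module.End ℝ W) := by
  obtain ⟨k, hk⟩ := h
  have key : ∀ (k : ℕ) (x : W), ((f ∘ₗ g : Module.End ℝ W) ^ (k + 1)) x
      = f (((g ∘ₗ f : Module.End ℝ V) ^ k) (g x)) := by
    intro k
    induction k with
    | zero => intro x; simp
    | succ k ih => intro x; rw [pow_succ', Module.End.mul_apply, ih, pow_succ' _ k]; rfl
  refine ⟨k + 1, LinearMap.ext fun x => ?_⟩
  rw [key, hk]; simp

theorem exists_proj (n : ℕ) : ∀ (V : Type) [AddCommGroup V] [Module ℝ V] [FiniteDimensional ℝ V]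
    (p : Submodule ℝ V) (f : p →ₗ[ℝ] V), Module.finrank ℝ V = n →
    (∀ q : Submodule ℝ V, q ≤ p → (∀ x : p, (x : V) ∈ q → f x ∈ q) → q = ⊥) →
    ∃ π : V →ₗ[ℝ] p, (∀ x : p, π x = x) ∧ IsNilpotent (π ∘ₗ f : Module.End ℝ p) := by
  induction n using Nat.strong_induction_on with
  | _ n ih =>
  intro V _ _ _ p f hn h
  by_cases hp : p = ⊤
  · have hb : (⊤ : Submodule ℝ V) = ⊥ := h ⊤ (by simp [hp]) (by simp)
    have hz : ∀ x : V, x = 0 := fun x => by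
      have : x ∈ (⊤ : Submodule ℝ V) := trivial
      rwa [hb, Submodule.mem_bot] at this
    refine ⟨0, fun x => Subtype.ext (by rw [hz x]; simp), ?_⟩
    simp
  have hlt : Module.finrank ℝ p < n := hn ▸ Submodule.finrank_lt hp
  let p' : Submodule ℝ p := p.comap f
  let f' : p' →ₗ[ℝ] p := (f ∘ₗ p'.subtype).codRestrict p (fun x => x.2)
  obtain ⟨π', hπ', hnil⟩ := ih _ hlt p p' f' rfl (by
    intro q hq hinv
    have := h (q.map p.subtype) (Submodule.map_subtype_le p q) (by
      rintro x ⟨y, hy, hyx⟩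
      have hyx : y = x := Subtype.ext hyx
      subst hyx
      exact ⟨f' ⟨y, hq hy⟩, hinv ⟨y, hq hy⟩ hy, rfl⟩)
    exact Submodule.map_injective_of_injective p.injective_subtype (by rw [this, Submodule.map_bot]))
  have hdis : Disjoint ((LinearMap.ker π').map f) p := by
    rw [Submodule.disjoint_def]
    rintro _ ⟨m, hm, rfl⟩ hmp
    have h1 := hπ' ⟨m, hmp⟩
    have h2 : π' m = 0 := hm
    have h3 : m = 0 := by
      have := congrArg Subtype.val h1
      simp only [h2] at this
      exact this.symm
    simp [h3]
  obtain ⟨M, hM, hc⟩ := hdis.exists_isCompl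
  have hc' := hc.symm
  refine ⟨p.projectionOnto M hc', fun x => Submodule.projectionOnto_apply_left hc' x, ?_⟩
  have : (p.projectionOnto M hc') ∘ₗ f = f' ∘ₗ π' := by
    ext1 x
    have hk : x - (π' x : p) ∈ LinearMap.ker π' := by
      rw [LinearMap.mem_ker, map_sub, hπ', sub_self]
    have hz : p.projectionOnto M hc' (f (x - (π' x : p))) = 0 :=
      (Submodule.projectionOnto_apply_eq_zero_iff hc').2 (hM ⟨_, hk, rfl⟩)
    rw [map_sub, map_sub, sub_eq_zero] at hz
    rw [LinearMap.comp_apply, hz]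
    exact Submodule.projectionOnto_apply_left hc' (f' (π' x))
  rw [this]
  exact nilp_swap _ _ hnil

/-- Existence of a deadbeat observer gain for an observable pair `(C, A)`. -/
theorem stmt_7 (nx ny : ℕ)
    (A : Matrix (Fin nx) (Fin nx) ℝ) (C : Matrix (Fin ny) (Fin nx) ℝ)
    (hobs : (obsMat nx A C).rank = nx) :
    ∃ L : Matrix (Fin nx) (Fin ny) ℝ, (A - L * C) ^ nx = 0 := by
  have hinj : ∀ x, (obsMat nx A C).mulVec x = 0 → x = 0 := by
    have h1 := LinearMap.finrank_range_add_finrank_ker (obsMat nx A C).mulVecLin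
    have h2 : Module.finrank ℝ (LinearMap.range (obsMat nx A C).mulVecLin) = nx := hobs
    rw [h2, Module.finrank_fin_fun] at h1
    have h3 : LinearMap.ker (obsMat nx A C).mulVecLin = ⊥ :=
      Submodule.finrank_eq_zero.1 (by omega)
    intro x hx
    have : x ∈ LinearMap.ker (obsMat nx A C).mulVecLin := hx
    rwa [h3, Submodule.mem_bot] at this
  let a := Matrix.toLin' A
  let c := Matrix.toLin' C
  let p := LinearMap.ker c
  obtain ⟨π, hπ, hnil⟩ := exists_proj _ (Fin nx → ℝ) p (a ∘ₗ p.subtype) rfl (by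
    intro q hq hinv
    rw [Submodule.eq_bot_iff]
    intro x hx
    have hpow : ∀ k : ℕ, (A ^ k).mulVec x ∈ q := by
      intro k
      induction k with
      | zero => simpa using hx
      | succ k ihk =>
        have := hinv ⟨_, hq ihk⟩ ihk
        rw [pow_succ', ← Matrix.mulVec_mulVec]
        exact this
    apply hinj
    funext i
    have h4 : C.mulVec ((A ^ (i.1 : ℕ)).mulVec x) = 0 := hq (hpow i.1)
    rw [Matrix.mulVec_mulVec] at h4
    exact congrFun h4 i.2)
  have hnil2 : IsNilpotent ((a ∘ₗ p.subtype) ∘ₗ π : Module.End ℝ (Fin nx → ℝ)) :=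
    nilp_swap _ _ hnil
  let g : (Fin nx → ℝ) →ₗ[ℝ] (Fin nx → ℝ) := a - (a ∘ₗ p.subtype) ∘ₗ π
  have hg : LinearMap.ker c ≤ LinearMap.ker g := by
    intro x hx
    have h5 := hπ ⟨x, hx⟩
    simp only [LinearMap.mem_ker]
    change a x - a (π x : Fin nx → ℝ) = 0
    have h6 : π x = ⟨x, hx⟩ := h5
    rw [h6, sub_self]
  obtain ⟨l, hl⟩ := LinearMap.exists_extend
    ((LinearMap.ker c).liftQ g hg ∘ₗ c.quotKerEquivRange.symm.toLinearMap)
  have hlc : l ∘ₗ c = g := by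
    refine LinearMap.ext fun x => ?_
    have h7 := LinearMap.congr_fun hl ⟨c x, x, rfl⟩
    have h8 : c.quotKerEquivRange.symm ⟨c x, x, rfl⟩ = (LinearMap.ker c).mkQ x := by
      rw [LinearEquiv.symm_apply_eq]; rfl
    simp only [LinearMap.comp_apply, LinearEquiv.coe_coe, h8] at h7
    exact h7
  refine ⟨LinearMap.toMatrix' l, ?_⟩
  apply Matrix.toLin'.injective
  have h9 : Matrix.toLin' (A - LinearMap.toMatrix' l * C) = (a ∘ₗ p.subtype) ∘ₗ π := by
    rw [map_sub, Matrix.toLin'_mul, Matrix.toLin'_toMatrix']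
    change a - l ∘ₗ c = _
    rw [hlc]
    simp [g]
  rw [Matrix.toLin'_pow, h9, map_zero]
  have h10 := IsNilpotent.charpoly_eq_X_pow_finrank hnil2
  have h11 := LinearMap.aeval_self_charpoly ((a ∘ₗ p.subtype) ∘ₗ π)
  rw [h10] at h11
  simpa using h11
end
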